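/- arXiv:quant-ph/0607074 — 2 statements merged into one kernel-verified Lean document; each statement's English description precedes it below -/
import Mathlib

section
/- Fix an integer s ≥ 1. For all integers n ≥ 0 and all 0 ≤ j ≤ i ≤ n, the number of pairs (c, E), where c : Fin n → Bool is a choice with exactly i indices k satisfying c k = false and E is a noncrossing contraction with exactly j edges of the word of (a + (a†)^s)^n associated to c, satisfies (n+1) · #{such pairs} = C(n+1, j+1) · C(n−j, n−i) · C(s(n−i), j), where C denotes the binomial coefficient. -/
/-- Two edges `(i,j)` and `(p,q)` cross if `i < p < j < q` or `p < i < q < j`. -/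
def Crosses {N : ℕ} (e f : Fin N × Fin N) : Prop :=
  (e.1 < f.1 ∧ f.1 < e.2 ∧ e.2 < f.2) ∨ (f.1 < e.1 ∧ e.1 < f.2 ∧ f.2 < e.2)

/-- A contraction of the word `w`: a set of edges `(i,j)` with `i < j`, `w i = false` (an `a`),
`w j = true` (an `a†`), whose endpoints are pairwise distinct. -/
def IsContraction {N : ℕ} (w : Fin N → Bool) (E : Finset (Fin N × Fin N)) : Prop :=
  (∀ e ∈ E, e.1 < e.2 ∧ w e.1 = false ∧ w e.2 = true) ∧
  (∀ e ∈ E, ∀ f ∈ E, e ≠ f → e.1 ≠ f.1 ∧ e.1 ≠ f.2 ∧ e.2 ≠ f.1 ∧ e.2 ≠ f.2)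

/-- A set of edges is noncrossing if no two of its edges cross. -/
def IsNoncrossing {N : ℕ} (E : Finset (Fin N × Fin N)) : Prop :=
  ∀ e ∈ E, ∀ f ∈ E, ¬ Crosses e f

/-- The number of noncrossing contractions of `w` with exactly `m` edges. -/
noncomputable def ncCount {N : ℕ} (w : Fin N → Bool) (m : ℕ) : ℕ :=
  Nat.card {E : Finset (Fin N × Fin N) //
    IsContraction w E ∧ IsNoncrossing E ∧ E.card = m}

/-- The word of `(a + (a†)^s)^n` associated to a choice `c : Fin n → Bool`: block `k` consists of
the single letter `a` (`false`) if `c k = false`, and of `s` copies of `a†` (`true`) otherwise. -/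
def wordChoiceAS (s : ℕ) {n : ℕ} (c : Fin n → Bool) : List Bool :=
  (List.ofFn c).flatMap (fun b => if b then List.replicate s true else [false])

/-- The number of pairs `(c, E)` where `c` is a choice for `(a + (a†)^s)^n` with exactly `i`
indices `k` satisfying `c k = false`, and `E` is a noncrossing contraction of the associated
word with exactly `j` edges. -/
noncomputable def pairCountAS (s n j i : ℕ) : ℕ :=
  Nat.card {p : Σ c : Fin n → Bool,
      Finset (Fin (wordChoiceAS s c).length × Fin (wordChoiceAS s c).length) //
    (Finset.univ.filter (fun k => p.1 k = false)).card = i ∧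
    IsContraction (wordChoiceAS s p.1).get p.2 ∧ IsNoncrossing p.2 ∧ p.2.card = j}

/-!
Read the word from left to right and keep track of the pairs `(E, H)` formed by a noncrossing
contraction `E` of the letters read so far and a set `H` of letters `a` left open, not covered by
any edge of `E`, that wait for a later partner. A new `a` is either left out for good or added to
`H`. A new `a†` is either left out or joined to the last letter of `H`, since an edge to an earlier
one would cover that last letter. Hence the numbers of pairs with given `#H` and `#E` satisfy a
linear recursion, in which a block `(a†)^s` closes `p` open letters in `C(s, p)` ways.

Summed over the choices with `m` blocks `(a†)^s` among `n`, the number of pairs with `#H = h` and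
`#E = d`, multiplied by `n + 1`, is `(h + 1) * (n + 1)! / ((h + d + 1)! m! (n - h - d - m)!) *
C(s m, d)`. This follows by induction on `n` from Vandermonde's identity and from the mean of the
hypergeometric distribution; the noncrossing contractions are the case `h = 0`.
-/

open Finset

/-! ### Trinomial coefficients -/

/-- The trinomial coefficient `n! / (k! m! (n - k - m)!)`, which is `0` for `n < k + m`. -/
def trinomial (n k m : ℕ) : ℕ := n.choose (k + m) * (k + m).choose k

theorem trinomial_eq_choose_mul_choose_sub (n k m : ℕ) :
    trinomial n k m = n.choose k * (n - k).choose m := by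
  rw [trinomial, Nat.choose_mul (Nat.le_add_right k m), Nat.add_sub_cancel_left]

theorem trinomial_comm (n k m : ℕ) : trinomial n k m = trinomial n m k := by
  rw [trinomial, trinomial, add_comm k m, Nat.choose_symm_add]

theorem succ_mul_trinomial_left (n k m : ℕ) :
    (n + 1) * trinomial n k m = (k + 1) * trinomial (n + 1) (k + 1) m := by
  rw [trinomial, trinomial, ← mul_assoc, Nat.add_one_mul_choose_eq, Nat.add_right_comm k 1 m,
    mul_assoc, Nat.add_one_mul_choose_eq]
  ring

theorem succ_mul_trinomial_right (n k m : ℕ) :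
    (n + 1) * trinomial n k m = (m + 1) * trinomial (n + 1) k (m + 1) := by
  rw [trinomial_comm, succ_mul_trinomial_left, trinomial_comm]

theorem succ_mul_choose_add_mul_choose_succ (n r : ℕ) :
    (n + 1) * n.choose r + r * (n + 1).choose r = (n + 1) * (n + 1).choose r := by
  cases r with
  | zero => simp
  | succ r =>
    have := Nat.add_one_mul_choose_eq n r
    rw [Nat.choose_succ_succ] at this ⊢
    linarith

theorem succ_mul_trinomial_add (n k m : ℕ) :
    (n + 1) * trinomial n k m + (k + m) * trinomial (n + 1) k m =
      (n + 1) * trinomial (n + 1) k m := by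
  have := succ_mul_choose_add_mul_choose_succ n (k + m)
  rw [trinomial, trinomial]
  linear_combination (k + m).choose k * this

theorem sum_antidiagonal_succ_fst_mul_choose_mul_choose (a b d : ℕ) :
    ∑ p ∈ antidiagonal (d + 1), p.1 * ((a + 1).choose p.1 * b.choose p.2) =
      (a + 1) * (a + b).choose d := by
  have habsorb : ∀ p : ℕ × ℕ, (p.1 + 1) * ((a + 1).choose (p.1 + 1) * b.choose p.2) =
      (a + 1) * (a.choose p.1 * b.choose p.2) := fun p => by
    rw [← mul_assoc, ← mul_assoc, Nat.add_one_mul_choose_eq, mul_comm (p.1 + 1)]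
  simp only [Nat.sum_antidiagonal_succ, habsorb, zero_mul, zero_add]
  rw [← mul_sum, ← Nat.add_choose_eq]

theorem succ_mul_sum_antidiagonal_fst_mul_choose_mul_choose (s m d : ℕ) :
    (m + 1) * ∑ p ∈ antidiagonal d, p.1 * (s.choose p.1 * (s * m).choose p.2) =
      d * (s * (m + 1)).choose d := by
  rcases d with - | d
  · simp
  rcases s with - | s
  · simp [Nat.sum_antidiagonal_succ]
  have habsorb := Nat.add_one_mul_choose_eq (s + (s + 1) * m) d
  rw [show s + (s + 1) * m + 1 = (s + 1) * (m + 1) by ring] at habsorb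
  rw [sum_antidiagonal_succ_fst_mul_choose_mul_choose]
  linear_combination habsorb

theorem succ_mul_sum_antidiagonal_add_fst_mul_choose_mul_choose (s m c d : ℕ) :
    (m + 1) * ∑ p ∈ antidiagonal d, (c + p.1) * (s.choose p.1 * (s * m).choose p.2) =
      (c * (m + 1) + d) * (s * (m + 1)).choose d := by
  have hvandermonde : ∑ p ∈ antidiagonal d, s.choose p.1 * (s * m).choose p.2 =
      (s * (m + 1)).choose d := by
    rw [mul_add_one, add_comm, Nat.add_choose_eq]
  simp only [add_mul c, sum_add_distrib, ← mul_sum, hvandermonde]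
  linear_combination succ_mul_sum_antidiagonal_fst_mul_choose_mul_choose s m d

theorem succ_mul_sum_antidiagonal_choose_mul_trinomial (s n m h d : ℕ) :
    (n + 1) * ∑ p ∈ antidiagonal d, s.choose p.1 *
        ((h + p.1 + 1) * trinomial n (h + p.1 + p.2 + 1) m * (s * m).choose p.2) =
      ((h + 1) * (m + 1) + d) *
        (trinomial (n + 1) (h + d + 1) (m + 1) * (s * (m + 1)).choose d) := by
  have hterm : ∀ p ∈ antidiagonal d, s.choose p.1 *
      ((h + p.1 + 1) * trinomial n (h + p.1 + p.2 + 1) m * (s * m).choose p.2) =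
        trinomial n (h + d + 1) m *
          ((h + 1 + p.1) * (s.choose p.1 * (s * m).choose p.2)) := fun p hp => by
    rw [add_assoc h p.1 p.2, mem_antidiagonal.1 hp]
    ring
  have htri := succ_mul_trinomial_right n (h + d + 1) m
  have hsum := succ_mul_sum_antidiagonal_add_fst_mul_choose_mul_choose s m (h + 1) d
  rw [sum_congr rfl hterm, ← mul_sum]
  linear_combination (∑ p ∈ antidiagonal d,
    (h + 1 + p.1) * (s.choose p.1 * (s * m).choose p.2)) * htri +
      trinomial (n + 1) (h + d + 1) (m + 1) * hsum

/-! ### Open contractions -/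

/-- Noncrossing contractions `E` of the first `t` letters of `w` together with a set `H` of further
annihilation letters among them, the *open* ones, none of which lies under an edge of `E`.
These are the contractions whose open letters can still be contracted with later creation
letters. -/
structure IsOpenContraction {N : ℕ} (w : Fin N → Bool) (t : ℕ) (E : Finset (Fin N × Fin N))
    (H : Finset (Fin N)) : Prop where
  isContraction : IsContraction w E
  isNoncrossing : IsNoncrossing E
  snd_lt : ∀ e ∈ E, (e.2 : ℕ) < t
  open_lt : ∀ x ∈ H, (x : ℕ) < t
  open_eq_false : ∀ x ∈ H, w x = false
  open_outside : ∀ x ∈ H, ∀ e ∈ E, x < e.1 ∨ e.2 < x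

open Classical in
/-- The pairs `(E, H)` of `IsOpenContraction` with exactly `h` open letters and `d` edges. -/
noncomputable def openContractions {N : ℕ} (w : Fin N → Bool) (t h d : ℕ) :
    Finset (Finset (Fin N × Fin N) × Finset (Fin N)) :=
  {q | IsOpenContraction w t q.1 q.2 ∧ #q.2 = h ∧ #q.1 = d}

section OpenContraction

variable {N : ℕ} {w : Fin N → Bool} {E : Finset (Fin N × Fin N)} {H : Finset (Fin N)} {k p : Fin N}

theorem mem_openContractions {t h d : ℕ} :
    (E, H) ∈ openContractions w t h d ↔ IsOpenContraction w t E H ∧ #H = h ∧ #E = d := by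
  simp [openContractions]

theorem isContraction_insert_iff (hE : ∀ e ∈ E, e.2 < k) (hk : w k = true) :
    IsContraction w (insert (p, k) E) ↔
      IsContraction w E ∧ p < k ∧ w p = false ∧ ∀ e ∈ E, e.1 ≠ p := by
  simp only [IsContraction, forall_mem_insert]
  grind

theorem isNoncrossing_insert_iff (hE : ∀ e ∈ E, e.2 < k) :
    IsNoncrossing (insert (p, k) E) ↔ IsNoncrossing E ∧ ∀ e ∈ E, ¬(e.1 < p ∧ p < e.2) := by
  simp only [IsNoncrossing, Crosses, forall_mem_insert]
  grind

theorem isOpenContraction_iff_succ :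
    IsOpenContraction w k E H ↔
      IsOpenContraction w (k + 1) E H ∧ k ∉ H ∧ ∀ x, (x, k) ∉ E := by
  grind [IsOpenContraction]

theorem isOpenContraction_succ_insert_open_iff (hk : k ∉ H) :
    IsOpenContraction w (k + 1) E (insert k H) ↔ w k = false ∧ IsOpenContraction w k E H := by
  grind [IsOpenContraction, IsContraction]

theorem IsContraction.outside_iff (hE : IsContraction w E) (hp : w p = false)
    {e : Fin N × Fin N} (he : e ∈ E) :
    p < e.1 ∨ e.2 < p ↔ e.1 ≠ p ∧ ¬(e.1 < p ∧ p < e.2) := by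
  have hlt := (hE.1 e he).1
  have hne : e.2 ≠ p := fun h => by simp [← h, (hE.1 e he).2.2] at hp
  grind

theorem isOpenContraction_succ_insert_edge_iff (hE : ∀ e ∈ E, e.2 < k) (hk : w k = true) :
    IsOpenContraction w (k + 1) (insert (p, k) E) H ↔
      IsOpenContraction w k E (insert p H) ∧ ∀ x ∈ H, x < p := by
  constructor
  · rintro ⟨hcon, hnc, -, hlt, hfalse, hout⟩
    obtain ⟨hcon, hpk, hp, hpE⟩ := (isContraction_insert_iff hE hk).1 hcon
    obtain ⟨hnc, hpnc⟩ := (isNoncrossing_insert_iff hE).1 hnc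
    simp only [forall_mem_insert] at hout
    have hHp : ∀ x ∈ H, x < p := fun x hx =>
      (hout x hx).1.resolve_right (not_lt.2 (Nat.lt_succ_iff.1 (hlt x hx)))
    exact ⟨⟨hcon, hnc, hE, (forall_mem_insert _ _ _).2 ⟨hpk, fun x hx => (hHp x hx).trans hpk⟩,
      (forall_mem_insert _ _ _).2 ⟨hp, hfalse⟩, (forall_mem_insert _ _ _).2
        ⟨fun e he => (hcon.outside_iff hp he).2 ⟨hpE e he, hpnc e he⟩, fun x hx => (hout x hx).2⟩⟩,
      hHp⟩
  · rintro ⟨⟨hcon, hnc, -, hlt, hfalse, hout⟩, hHp⟩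
    simp only [forall_mem_insert] at hlt hfalse hout
    have hpE : ∀ e ∈ E, e.1 ≠ p ∧ ¬(e.1 < p ∧ p < e.2) := fun e he =>
      (hcon.outside_iff hfalse.1 he).1 (hout.1 e he)
    exact ⟨(isContraction_insert_iff hE hk).2 ⟨hcon, hlt.1, hfalse.1, fun e he => (hpE e he).1⟩,
      (isNoncrossing_insert_iff hE).2 ⟨hnc, fun e he => (hpE e he).2⟩,
      (forall_mem_insert _ _ _).2 ⟨Nat.lt_succ_self _, fun e he => Nat.lt_succ_of_lt (hE e he)⟩,
      fun x hx => Nat.lt_succ_of_lt (hlt.2 x hx), hfalse.2,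
      fun x hx => (forall_mem_insert _ _ _).2 ⟨Or.inl (hHp x hx), hout.2 x hx⟩⟩

theorem IsOpenContraction.snd_lt_of_mem_erase (h : IsOpenContraction w (k + 1) E H)
    (hpk : (p, k) ∈ E) : ∀ e ∈ E.erase (p, k), e.2 < k := by
  intro e he
  obtain ⟨hne, he⟩ := mem_erase.1 he
  exact lt_of_le_of_ne (Nat.lt_succ_iff.1 (h.snd_lt e he))
    (h.isContraction.2 e he _ hpk hne).2.2.2

theorem filter_openContractions_succ (h d : ℕ) :
    {q ∈ openContractions w (k + 1) h d | k ∉ q.2 ∧ ∀ x, (x, k) ∉ q.1} =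
      openContractions w k h d := by
  ext ⟨E, H⟩
  simp only [mem_filter, mem_openContractions, isOpenContraction_iff_succ (k := k)]
  tauto

theorem card_openContractions_succ_filter_open (hk : w k = false) (h d : ℕ) :
    #{q ∈ openContractions w (k + 1) (h + 1) d | k ∈ q.2} = #(openContractions w k h d) := by
  symm
  refine card_nbij' (fun q => (q.1, insert k q.2)) (fun q => (q.1, q.2.erase k)) ?_ ?_ ?_ ?_
  · rintro ⟨E, H⟩ hq
    obtain ⟨hopen, hH, hE⟩ := mem_openContractions.1 hq
    have hkH : k ∉ H := fun hkH => lt_irrefl _ (hopen.open_lt k hkH)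
    exact mem_filter.2 ⟨mem_openContractions.2
      ⟨(isOpenContraction_succ_insert_open_iff hkH).2 ⟨hk, hopen⟩,
        by rw [card_insert_of_notMem hkH, hH], hE⟩, mem_insert_self _ _⟩
  · rintro ⟨E, H⟩ hq
    obtain ⟨hq, hkH : k ∈ H⟩ := mem_filter.1 hq
    obtain ⟨hopen, hH, hE⟩ := mem_openContractions.1 hq
    rw [← insert_erase hkH, isOpenContraction_succ_insert_open_iff (notMem_erase k H)] at hopen
    exact mem_openContractions.2
      ⟨hopen.2, by rw [card_erase_of_mem hkH, hH, Nat.add_sub_cancel], hE⟩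
  · rintro ⟨E, H⟩ hq
    have hkH : k ∉ H := fun hkH => lt_irrefl _ ((mem_openContractions.1 hq).1.open_lt k hkH)
    simp only [erase_insert hkH]
  · rintro ⟨E, H⟩ hq
    simp only [insert_erase (mem_filter.1 hq).2]

theorem eq_and_eq_of_insert_eq_of_erase_eq {E' : Finset (Fin N × Fin N)} {H' : Finset (Fin N)}
    {p' : Fin N} (hE : ∀ x, (x, k) ∉ E) (hE' : ∀ x, (x, k) ∉ E') (hp : p ∈ H) (hp' : p' ∈ H')
    (hins : insert (p, k) E = insert (p', k) E') (heras : H.erase p = H'.erase p') :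
    E = E' ∧ H = H' := by
  obtain rfl : p = p' := by
    have hmem : (p, k) ∈ insert (p', k) E' := hins ▸ mem_insert_self _ _
    exact congrArg Prod.fst ((mem_insert.1 hmem).resolve_right (hE' p))
  exact ⟨by rw [← erase_insert (hE p), hins, erase_insert (hE' p)],
    by rw [← insert_erase hp, heras, insert_erase hp']⟩

theorem card_openContractions_succ_filter_edge (hk : w k = true) (h d : ℕ) :
    #{q ∈ openContractions w (k + 1) h (d + 1) | ∃ x, (x, k) ∈ q.1} =
      #(openContractions w k (h + 1) d) := by
  have hne : ∀ q ∈ openContractions w k (h + 1) d, q.2.Nonempty := fun ⟨E, H⟩ hq =>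
    card_pos.1 (by rw [(mem_openContractions.1 hq).2.1]; exact h.succ_pos)
  have hlt : ∀ q ∈ openContractions w k (h + 1) d, ∀ e ∈ q.1, e.2 < k := fun ⟨E, H⟩ hq =>
    (mem_openContractions.1 hq).1.snd_lt
  have hnotMem : ∀ q ∈ openContractions w k (h + 1) d, ∀ x, (x, k) ∉ q.1 := fun q hq x hx =>
    lt_irrefl _ (hlt q hq _ hx)
  symm
  -- An edge ending at `k` must start at the last open letter, lest it cover another open letter.
  refine card_bij
    (fun q hq => (insert (q.2.max' (hne q hq), k) q.1, q.2.erase (q.2.max' (hne q hq)))) ?_ ?_ ?_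
  · rintro ⟨E, H⟩ hq
    obtain ⟨hopen, hH, hE⟩ := mem_openContractions.1 hq
    have hmax := max'_mem H (hne _ hq)
    refine mem_filter.2 ⟨mem_openContractions.2
      ⟨(isOpenContraction_succ_insert_edge_iff (hlt _ hq) hk).2
        ⟨by rwa [insert_erase hmax], fun x hx => lt_max'_of_mem_erase_max' _ _ hx⟩, ?_, ?_⟩,
      _, mem_insert_self _ _⟩
    · rw [card_erase_of_mem hmax, hH, Nat.add_sub_cancel]
    · rw [card_insert_of_notMem (hnotMem _ hq _), hE]
  · rintro ⟨E, H⟩ hq ⟨E', H'⟩ hq' heq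
    exact Prod.ext_iff.2 (eq_and_eq_of_insert_eq_of_erase_eq (hnotMem _ hq) (hnotMem _ hq')
      (max'_mem H _) (max'_mem H' _) (congrArg Prod.fst heq) (congrArg Prod.snd heq))
  · rintro ⟨E, H⟩ hq
    obtain ⟨hq, p, hpk : (p, k) ∈ E⟩ := mem_filter.1 hq
    obtain ⟨hopen, hH, hE⟩ := mem_openContractions.1 hq
    have hlt' := hopen.snd_lt_of_mem_erase hpk
    rw [← insert_erase hpk, isOpenContraction_succ_insert_edge_iff hlt' hk] at hopen
    obtain ⟨hopen, hHp⟩ := hopen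
    have hpH : p ∉ H := fun hp => lt_irrefl _ (hHp p hp)
    refine ⟨(E.erase (p, k), insert p H), mem_openContractions.2 ⟨hopen, ?_, ?_⟩, ?_⟩
    · rw [card_insert_of_notMem hpH, hH]
    · rw [card_erase_of_mem hpk, hE, Nat.add_sub_cancel]
    · have hmax : (insert p H).max' (insert_nonempty p H) = p :=
        (max'_eq_iff _ _ _).2 ⟨mem_insert_self p H,
          (forall_mem_insert _ _ _).2 ⟨le_rfl, fun x hx => (hHp x hx).le⟩⟩
      simp only [hmax, insert_erase hpk, erase_insert hpH]

end OpenContraction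

/-- The effect on the numbers `f h d` of open contractions with `h` open letters and `d` edges of
appending the letter `b` to the word. -/
def openStep (f : ℕ → ℕ → ℕ) : Bool → ℕ → ℕ → ℕ
  | false, 0, d => f 0 d
  | false, h + 1, d => f (h + 1) d + f h d
  | true, h, 0 => f h 0
  | true, h, d + 1 => f h (d + 1) + f (h + 1) d

/-- The number of open contractions of a word with `h` open letters and `d` edges, computed
letter by letter. -/
def openCount (l : List Bool) : ℕ → ℕ → ℕ :=
  l.foldl openStep fun h d => if h = 0 ∧ d = 0 then 1 else 0

theorem openCount_concat (l : List Bool) (b : Bool) :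
    openCount (l ++ [b]) = openStep (openCount l) b := by
  simp only [openCount, List.foldl_append, List.foldl_cons, List.foldl_nil]

theorem isOpenContraction_zero_iff {N : ℕ} {w : Fin N → Bool} {E : Finset (Fin N × Fin N)}
    {H : Finset (Fin N)} : IsOpenContraction w 0 E H ↔ E = ∅ ∧ H = ∅ := by
  refine ⟨fun hopen => ⟨eq_empty_of_forall_notMem fun e he => Nat.not_lt_zero _ (hopen.snd_lt e he),
    eq_empty_of_forall_notMem fun x hx => Nat.not_lt_zero _ (hopen.open_lt x hx)⟩, ?_⟩
  rintro ⟨rfl, rfl⟩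
  constructor <;> simp [IsContraction, IsNoncrossing]

theorem card_openContractions_zero {N : ℕ} (w : Fin N → Bool) (h d : ℕ) :
    #(openContractions w 0 h d) = if h = 0 ∧ d = 0 then 1 else 0 := by
  split_ifs with hhd
  · refine card_eq_one.2 ⟨(∅, ∅), ?_⟩
    ext ⟨E, H⟩
    rw [mem_openContractions, isOpenContraction_zero_iff, mem_singleton, Prod.mk.injEq]
    grind
  · refine card_eq_zero.2 (eq_empty_of_forall_notMem fun ⟨E, H⟩ hq => ?_)
    rw [mem_openContractions, isOpenContraction_zero_iff] at hq
    grind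

theorem card_openContractions_succ {N : ℕ} (w : Fin N → Bool) (k : Fin N) (h d : ℕ) :
    #(openContractions w (k + 1) h d) =
      openStep (fun h d => #(openContractions w k h d)) (w k) h d := by
  rw [← card_filter_add_card_filter_not (fun q => k ∉ q.2 ∧ ∀ x, (x, k) ∉ q.1),
    filter_openContractions_succ]
  rcases hk : w k
  · have hused : ∀ q ∈ openContractions w (k + 1) h d,
        ¬(k ∉ q.2 ∧ ∀ x, (x, k) ∉ q.1) ↔ k ∈ q.2 := fun ⟨E, H⟩ hq => by
      have hcon := (mem_openContractions.1 hq).1.isContraction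
      have : ∀ x, (x, k) ∉ E := fun x hx => by simpa [hk] using (hcon.1 _ hx).2.2
      simp [this]
    rw [filter_congr hused]
    rcases h with - | h
    · rw [openStep, add_eq_left, card_eq_zero, filter_eq_empty_iff]
      rintro ⟨E, H⟩ hq
      rw [card_eq_zero.1 (mem_openContractions.1 hq).2.1]
      exact notMem_empty k
    · rw [openStep, card_openContractions_succ_filter_open hk]
  · have hused : ∀ q ∈ openContractions w (k + 1) h d,
        ¬(k ∉ q.2 ∧ ∀ x, (x, k) ∉ q.1) ↔ ∃ x, (x, k) ∈ q.1 := fun ⟨E, H⟩ hq => by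
      have hfalse := (mem_openContractions.1 hq).1.open_eq_false
      have : k ∉ H := fun hkH => by simpa [hk] using hfalse k hkH
      simp [this]
    rw [filter_congr hused]
    rcases d with - | d
    · rw [openStep, add_eq_left, card_eq_zero, filter_eq_empty_iff]
      rintro ⟨E, H⟩ hq ⟨x, hx⟩
      rw [card_eq_zero.1 (mem_openContractions.1 hq).2.2] at hx
      exact notMem_empty _ hx
    · rw [openStep, card_openContractions_succ_filter_edge hk]

theorem card_openContractions {N : ℕ} (w : Fin N → Bool) {t : ℕ} (ht : t ≤ N) (h d : ℕ) :
    #(openContractions w t h d) = openCount ((List.ofFn w).take t) h d := by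
  induction t generalizing h d with
  | zero => rw [card_openContractions_zero, List.take_zero, openCount, List.foldl_nil]
  | succ t ih =>
    have ih : (fun h d => #(openContractions w t h d)) = openCount ((List.ofFn w).take t) :=
      funext₂ fun h d => ih (Nat.le_of_succ_le ht) h d
    rw [List.take_succ_eq_append_getElem (by rwa [List.length_ofFn]), openCount_concat,
      List.getElem_ofFn, ← ih]
    exact card_openContractions_succ w ⟨t, ht⟩ h d

theorem ncCount_eq_card_openContractions {N : ℕ} (w : Fin N → Bool) (m : ℕ) :
    ncCount w m = #(openContractions w N 0 m) := by
  classical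
  have hiff : ∀ E, IsOpenContraction w N E ∅ ↔ IsContraction w E ∧ IsNoncrossing E := fun E =>
    ⟨fun h => ⟨h.isContraction, h.isNoncrossing⟩,
      fun h => ⟨h.1, h.2, fun e _ => e.2.isLt, by simp, by simp, by simp⟩⟩
  rw [ncCount, Nat.subtype_card {E | IsContraction w E ∧ IsNoncrossing E ∧ #E = m} (by simp)]
  refine card_nbij' (fun E => (E, ∅)) Prod.fst ?_ ?_ (fun _ _ => rfl) ?_
  · intro E hE
    obtain ⟨hcon, hnc, hcard⟩ := (mem_filter.1 hE).2
    exact mem_openContractions.2 ⟨(hiff E).2 ⟨hcon, hnc⟩, card_empty, hcard⟩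
  · rintro ⟨E, H⟩ hq
    obtain ⟨hopen, -, hcard⟩ := mem_openContractions.1 hq
    exact mem_filter.2 ⟨mem_univ _, hopen.isContraction, hopen.isNoncrossing, hcard⟩
  · rintro ⟨E, H⟩ hq
    rw [card_eq_zero.1 (mem_openContractions.1 hq).2.1]

theorem ncCount_get (l : List Bool) (m : ℕ) : ncCount l.get m = openCount l 0 m := by
  rw [ncCount_eq_card_openContractions, card_openContractions _ le_rfl, List.ofFn_get,
    List.take_length]

/-! ### Powers of `a + (a†)^s` -/

theorem openCount_append_replicate_true (l : List Bool) (s h d : ℕ) :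
    openCount (l ++ List.replicate s true) h d =
      ∑ p ∈ antidiagonal d, s.choose p.1 * openCount l (h + p.1) p.2 := by
  induction s generalizing h d with
  | zero =>
    cases d with
    | zero => simp
    | succ d => simp [Nat.sum_antidiagonal_succ]
  | succ s ih =>
    rw [List.replicate_succ', ← List.append_assoc, openCount_concat]
    cases d with
    | zero => simp [openStep, ih]
    | succ d =>
      rw [openStep, ih, ih, Nat.sum_antidiagonal_succ, Nat.sum_antidiagonal_succ, add_assoc,
        ← sum_add_distrib]
      congr 1
      · simp
      · refine sum_congr rfl fun p _ => ?_
        rw [Nat.choose_succ_succ, add_mul, add_comm, add_assoc h, add_comm 1]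

/-- The total number, over all choices for `(a + (a†)^s)^n` with exactly `m` blocks
`(a†)^s`, of open contractions with `h` open letters and `d` edges. -/
def openCountAS (s n m h d : ℕ) : ℕ :=
  ∑ c : Fin n → Bool with #{k | c k = true} = m, openCount (wordChoiceAS s c) h d

theorem wordChoiceAS_snoc (s : ℕ) {n : ℕ} (c : Fin n → Bool) (b : Bool) :
    wordChoiceAS s (Fin.snoc c b : Fin (n + 1) → Bool) =
      wordChoiceAS s c ++ if b then List.replicate s true else [false] := by
  rw [wordChoiceAS, List.ofFn_succ_last, List.flatMap_append]
  simp [wordChoiceAS]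

theorem sum_fin_succ_fun {M α : Type*} [AddCommMonoid M] [Fintype α] {n : ℕ}
    (f : (Fin (n + 1) → α) → M) :
    ∑ c, f c = ∑ a, ∑ c : Fin n → α, f (Fin.snoc c a : Fin (n + 1) → α) := by
  rw [← (Fin.snocEquiv fun _ => α).sum_comp, Fintype.sum_prod_type]
  rfl

theorem card_filter_snoc_eq {α : Type*} [DecidableEq α] {n : ℕ} (c : Fin n → α) (a b : α) :
    #{k | (Fin.snoc c a : Fin (n + 1) → α) k = b} =
      #{k | c k = b} + if a = b then 1 else 0 := by
  simp only [card_filter, Fin.sum_univ_castSucc, Fin.snoc_castSucc, Fin.snoc_last]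

theorem openCountAS_succ (s n m h d : ℕ) :
    openCountAS s (n + 1) m h d =
      openCountAS s n m h d + (if h = 0 then 0 else openCountAS s n m (h - 1) d) +
        if m = 0 then 0 else ∑ p ∈ antidiagonal d,
          s.choose p.1 * openCountAS s n (m - 1) (h + p.1) p.2 := by
  rw [openCountAS, sum_filter, sum_fin_succ_fun, Fintype.sum_bool, add_comm]
  simp only [card_filter_snoc_eq, wordChoiceAS_snoc, if_true, Bool.false_eq_true, if_false,
    add_zero, openCount_append_replicate_true, openCount_concat, ← sum_filter]
  congr 1
  · cases h with
    | zero => rw [if_pos rfl, add_zero]; rfl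
    | succ h => exact sum_add_distrib
  · cases m with
    | zero => simp
    | succ m =>
      simp only [openCountAS, add_left_inj, Nat.add_eq_zero_iff, one_ne_zero, and_false, if_false,
        Nat.add_sub_cancel, mul_sum]
      exact sum_comm

theorem openCountAS_zero (s m h d : ℕ) :
    openCountAS s 0 m h d = if m = 0 ∧ h = 0 ∧ d = 0 then 1 else 0 := by
  simp only [openCountAS, univ_eq_empty, filter_empty, card_empty, sum_filter,
    Fintype.sum_unique, ite_and, eq_comm (a := 0)]
  simp [wordChoiceAS, openCount, ite_and]

theorem succ_mul_openCountAS (s n m h d : ℕ) :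
    (n + 1) * openCountAS s n m h d =
      (h + 1) * trinomial (n + 1) (h + d + 1) m * (s * m).choose d := by
  induction n generalizing m h d with
  | zero =>
    rw [openCountAS_zero]
    split_ifs with h0
    · obtain ⟨rfl, rfl, rfl⟩ := h0
      simp [trinomial]
    · rw [trinomial, Nat.choose_eq_zero_of_lt (by omega)]
      simp
  | succ n ih =>
    set T := trinomial (n + 1 + 1) (h + d + 1) m with hT
    set C := (s * m).choose d with hC
    have hskip : (n + 2) * ((n + 1) * openCountAS s n m h d) +
        (h + 1) * (h + d + 1 + m) * (T * C) = (n + 2) * (h + 1) * (T * C) := by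
      have := succ_mul_trinomial_add (n + 1) (h + d + 1) m
      rw [ih]
      linear_combination (h + 1) * C * this
    have hopen : (n + 2) * ((n + 1) * if h = 0 then 0 else openCountAS s n m (h - 1) d) =
        h * (h + d + 1) * (T * C) := by
      rcases h with - | h
      · simp
      have := succ_mul_trinomial_left (n + 1) (h + d + 1) m
      rw [if_neg h.succ_ne_zero, Nat.add_sub_cancel, ih, hT, Nat.add_right_comm h 1 d]
      linear_combination (h + 1) * C * this
    have hclose : (n + 2) * ((n + 1) * if m = 0 then 0 else ∑ p ∈ antidiagonal d,
        s.choose p.1 * openCountAS s n (m - 1) (h + p.1) p.2) =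
          ((h + 1) * m + d) * (T * C) := by
      rcases m with - | m
      · rcases d with - | d <;> simp [hC]
      rw [if_neg m.succ_ne_zero, Nat.add_sub_cancel, mul_sum]
      simp only [mul_left_comm (n + 1), ih]
      exact succ_mul_sum_antidiagonal_choose_mul_trinomial s (n + 1) m h d
    refine Nat.eq_of_mul_eq_mul_left (Nat.add_one_pos n) (Nat.add_right_cancel
      (m := (h + 1) * (h + d + 1 + m) * (T * C)) ?_)
    rw [openCountAS_succ]
    linear_combination hskip + hopen + hclose

theorem pairCountAS_eq_openCountAS (s : ℕ) {n i : ℕ} (hin : i ≤ n) (j : ℕ) :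
    pairCountAS s n j i = openCountAS s n (n - i) 0 j := by
  have hfilter : ∀ c : Fin n → Bool, #{k | c k = false} = i ↔ #{k | c k = true} = n - i := by
    intro c
    have := card_filter_add_card_filter_not (s := univ) (fun k => c k = true)
    simp only [Bool.not_eq_true, card_univ, Fintype.card_fin] at this
    omega
  let e : {p : Σ c : Fin n → Bool,
        Finset (Fin (wordChoiceAS s c).length × Fin (wordChoiceAS s c).length) //
      #{k | p.1 k = false} = i ∧ IsContraction (wordChoiceAS s p.1).get p.2 ∧
        IsNoncrossing p.2 ∧ #p.2 = j} ≃
      Σ c : Fin n → Bool, {E // #{k | c k = false} = i ∧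
        IsContraction (wordChoiceAS s c).get E ∧ IsNoncrossing E ∧ #E = j} :=
    ⟨fun p => ⟨p.1.1, p.1.2, p.2⟩, fun q => ⟨⟨q.1, q.2.1⟩, q.2.2⟩, fun _ => rfl, fun _ => rfl⟩
  rw [pairCountAS, Nat.card_congr e, Nat.card_sigma, openCountAS, sum_filter]
  refine sum_congr rfl fun c _ => ?_
  split_ifs with h
  · simp only [(hfilter c).2 h, true_and]
    exact ncCount_get _ j
  · simp [hfilter c, h]

theorem stmt7 (s : ℕ) (hs : 1 ≤ s) (n i j : ℕ) (hji : j ≤ i) (hin : i ≤ n) :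
    (n + 1) * pairCountAS s n j i
      = Nat.choose (n + 1) (j + 1) * Nat.choose (n - j) (n - i)
          * Nat.choose (s * (n - i)) j := by
  rw [pairCountAS_eq_openCountAS s hin, succ_mul_openCountAS, trinomial_eq_choose_mul_choose_sub,
    zero_add, zero_add, one_mul, Nat.add_sub_add_right]
end

section
/- For all integers n ≥ 0 and all 0 ≤ j ≤ i ≤ n−j, the number of pairs (c, E), where c : Fin n → Bool is a choice with exactly i indices k satisfying c k = false and E is a noncrossing contraction with exactly j edges of the word of (a + a†)^n associated to c, equals c_j · C(n, i+j) · C(i+j, 2j), where c_j = C(2j, j)/(j+1) is the j-th Catalan number and C denotes the binomial coefficient. -/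
/-- The number of pairs `(c, E)` where `c : Fin n → Bool` is a choice for `(a + a†)^n` (the
associated word has letter `a` at position `k` if `c k = false` and `a†` otherwise) with
exactly `i` indices `k` satisfying `c k = false`, and `E` is a noncrossing contraction of the
associated word with exactly `j` edges. -/
noncomputable def pairCountAA (n j i : ℕ) : ℕ :=
  Nat.card {p : (Fin n → Bool) × Finset (Fin n × Fin n) //
    (Finset.univ.filter (fun k => p.1 k = false)).card = i ∧
    IsContraction p.1 p.2 ∧ IsNoncrossing p.2 ∧ p.2.card = j}

/-!
An edge of a contraction forces the letters at its two endpoints: `a` on the left, `a†` on the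
right. So a pair `(c, E)` amounts to a noncrossing matching `E` with `j` edges together with the
`i - j` further positions, among the `n - 2 * j` that `E` does not meet, that carry an `a`.
Since `n.choose (2 * j) * (n - 2 * j).choose (i - j) = n.choose (i + j) * (i + j).choose (2 * j)`,
this leaves the number of noncrossing matchings with `j` edges, `catalan j * n.choose (2 * j)`.

To get a recursion in `n`, matchings are counted together with `h` open points, which no edge
meets or covers and which later points may be joined to. The last point is unused, or open, or
joined to what would otherwise be the last open point; Pascal's rule turns the three cases into
the ballot recursion.
-/

section Ballot

/-- The ballot numbers, which count the noncrossing matchings of a chain of `2 * j + h` points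
with `j` edges and `h` open points, so that every point is used. -/
def ballot : ℕ → ℕ → ℕ
  | 0, _ => 1
  | j + 1, 0 => ballot j 1
  | j + 1, h + 1 => ballot (j + 1) h + ballot j (h + 2)

theorem ballot_succ_add_choose (j h : ℕ) :
    ballot (j + 1) h + (2 * j + 2 + h).choose j = (2 * j + 2 + h).choose (j + 1) := by
  induction j generalizing h with
  | zero =>
    induction h with
    | zero => simp [ballot]
    | succ h ih => grind [ballot]
  | succ j ihj =>
    induction h with
    | zero =>
      have symm : (2 * j + 3).choose (j + 2) = (2 * j + 3).choose (j + 1) :=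
        Nat.choose_symm_of_eq_add (by omega)
      have := ihj 1
      grind [ballot, Nat.choose_succ_succ']
    | succ h ih =>
      have := ihj (h + 2)
      grind [ballot, Nat.choose_succ_succ']

theorem ballot_zero_right (j : ℕ) : ballot j 0 = catalan j := by
  cases j with
  | zero => simp [ballot]
  | succ j =>
    have ballot_add : ballot (j + 1) 0 + (2 * j + 2).choose j = (2 * j + 2).choose (j + 1) :=
      ballot_succ_add_choose j 0
    have choose_mul : (2 * j + 2).choose (j + 1) * (j + 1) = (2 * j + 2).choose j * (j + 2) := by
      rw [Nat.choose_succ_right_eq, show 2 * j + 2 - j = j + 2 by omega]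
    have catalan_mul : (j + 2) * catalan (j + 1) = (2 * j + 2).choose (j + 1) := by
      rw [succ_mul_catalan_eq_centralBinom, Nat.centralBinom_eq_two_mul_choose, mul_add_one]
    apply Nat.eq_of_mul_eq_mul_left (by omega : 0 < j + 2)
    nlinarith

end Ballot

section Matching

open Finset

variable {α : Type*} [LinearOrder α] {S : Finset α} {E : Finset (α × α)} {U : Finset α}
  {m x : α} {j h : ℕ}

/-- A noncrossing matching of a linear order, each edge being the pair of its smaller and its
larger endpoint. -/
structure IsNoncrossingMatching (E : Finset (α × α)) : Prop where
  lt : ∀ e ∈ E, e.1 < e.2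
  endpoints_ne : ∀ e ∈ E, ∀ f ∈ E, e ≠ f → e.1 ≠ f.1 ∧ e.1 ≠ f.2 ∧ e.2 ≠ f.1 ∧ e.2 ≠ f.2
  noncrossing : ∀ e ∈ E, ∀ f ∈ E, ¬(e.1 < f.1 ∧ f.1 < e.2 ∧ e.2 < f.2)

/-- A noncrossing matching `E` of points of `S` with a set `U ⊆ S` of open points: points that
no edge meets or covers, so that each can still be joined to a point to the right of `S`. -/
structure IsOpenMatching (S : Finset α) (E : Finset (α × α)) (U : Finset α) : Prop
    extends IsNoncrossingMatching E where
  endpoints_mem : ∀ e ∈ E, e.1 ∈ S ∧ e.2 ∈ S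
  open_mem : ∀ u ∈ U, u ∈ S
  uncovered : ∀ e ∈ E, ∀ u ∈ U, u < e.1 ∨ e.2 < u

theorem IsNoncrossingMatching.mono {F : Finset (α × α)} (hF : IsNoncrossingMatching F)
    (hEF : E ⊆ F) : IsNoncrossingMatching E where
  lt e he := hF.lt e (hEF he)
  endpoints_ne e he f hf := hF.endpoints_ne e (hEF he) f (hEF hf)
  noncrossing e he f hf := hF.noncrossing e (hEF he) f (hEF hf)

namespace IsOpenMatching

theorem insert_iff_of_unused (hm : ∀ x ∈ S, x < m) (hU : m ∉ U) (hE : ∀ x, (x, m) ∉ E) :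
    IsOpenMatching (insert m S) E U ↔ IsOpenMatching S E U := by
  constructor <;> rintro ⟨matching, mem_S, open_S, uncovered⟩
  · have := matching.lt
    exact ⟨matching, by grind, by grind, uncovered⟩
  · exact ⟨matching, by grind, by grind, uncovered⟩

theorem insert_insert_open_iff (hm : ∀ x ∈ S, x < m) (hU : m ∉ U) :
    IsOpenMatching (insert m S) E (insert m U) ↔ IsOpenMatching S E U := by
  constructor <;> rintro ⟨matching, mem_S, open_S, uncovered⟩
  · have := matching.lt
    simp only [forall_mem_insert] at open_S uncovered
    exact ⟨matching, by grind, by grind, by grind⟩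
  · refine ⟨matching, by grind, ?_, ?_⟩ <;> simp only [forall_mem_insert] <;> grind

theorem insert_insert_edge_iff (hm : ∀ x ∈ S, x < m) (hE : (x, m) ∉ E) :
    IsOpenMatching (insert m S) (insert (x, m) E) U ↔
      IsOpenMatching S E (insert x U) ∧ ∀ u ∈ U, u < x := by
  constructor
  · rintro ⟨matching, mem_S, open_S, uncovered⟩
    have endpoints_ne : ∀ e ∈ E, e.1 ≠ x ∧ e.1 ≠ m ∧ e.2 ≠ x ∧ e.2 ≠ m := fun e he ↦
      matching.endpoints_ne e (mem_insert_of_mem he) (x, m) (mem_insert_self ..)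
        (ne_of_mem_of_not_mem he hE)
    have noncrossing : ∀ e ∈ E, ¬(e.1 < x ∧ x < e.2 ∧ e.2 < m) := fun e he ↦
      matching.noncrossing e (mem_insert_of_mem he) (x, m) (mem_insert_self ..)
    have lt := matching.lt
    simp only [forall_mem_insert] at lt mem_S uncovered
    have mem_E : ∀ e ∈ E, e.1 ∈ S ∧ e.2 ∈ S := by grind
    have not_covered : ∀ e ∈ E, x < e.1 ∨ e.2 < x := fun e he ↦ by
      have := endpoints_ne e he
      by_contra! covered
      exact noncrossing e he ⟨covered.1.lt_of_ne this.1, covered.2.lt_of_ne' this.2.2.1,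
        hm e.2 (mem_E e he).2⟩
    refine ⟨⟨matching.mono (subset_insert ..), mem_E, ?_, ?_⟩, by grind⟩ <;>
      simp only [forall_mem_insert] <;> grind
  · rintro ⟨⟨⟨lt, ne, nc⟩, mem_S, open_S, uncovered⟩, hx⟩
    simp only [forall_mem_insert] at open_S uncovered
    refine ⟨⟨?_, ?_, ?_⟩, ?_, by grind, ?_⟩ <;> simp only [forall_mem_insert] <;> grind

theorem mk_notMem (hE : IsOpenMatching S E U) (hm : m ∉ S) (x : α) :
    (x, m) ∉ E := fun hx ↦ hm (hE.endpoints_mem _ hx).2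

theorem notMem_image_snd (hE : IsOpenMatching S E U) (hm : m ∉ S) :
    m ∉ E.image Prod.snd := by
  simpa using hE.mk_notMem hm

end IsOpenMatching

open Classical in
/-- The finset of noncrossing matchings of points of `S` with `j` edges. -/
noncomputable def noncrossingMatchings (S : Finset α) (j : ℕ) : Finset (Finset (α × α)) :=
  {E ∈ (S ×ˢ S).powersetCard j | IsNoncrossingMatching E}

theorem mem_noncrossingMatchings : E ∈ noncrossingMatchings S j ↔
    IsNoncrossingMatching E ∧ (∀ e ∈ E, e.1 ∈ S ∧ e.2 ∈ S) ∧ #E = j := by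
  simp only [noncrossingMatchings, mem_filter, mem_powersetCard, subset_iff, mem_product]
  tauto

open Classical in
/-- The finset of noncrossing matchings of points of `S` with `j` edges and `h` open points. -/
noncomputable def openMatchings (S : Finset α) (j h : ℕ) :
    Finset (Finset (α × α) × Finset α) :=
  {p ∈ (S ×ˢ S).powersetCard j ×ˢ S.powersetCard h | IsOpenMatching S p.1 p.2}

theorem mem_openMatchings {p : Finset (α × α) × Finset α} :
    p ∈ openMatchings S j h ↔ IsOpenMatching S p.1 p.2 ∧ #p.1 = j ∧ #p.2 = h := by
  simp only [openMatchings, mem_filter, mem_product, mem_powersetCard]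
  constructor
  · tauto
  · rintro ⟨hp, card_edges, card_open⟩
    exact ⟨⟨⟨fun e he ↦ mem_product.2 (hp.endpoints_mem e he), card_edges⟩, hp.open_mem,
      card_open⟩, hp⟩

theorem filter_unused_openMatchings_insert (hm : ∀ x ∈ S, x < m) :
    {p ∈ openMatchings (insert m S) j h | m ∉ p.2 ∧ m ∉ p.1.image Prod.snd} =
      openMatchings S j h := by
  have m_notMem : m ∉ S := fun h ↦ (hm m h).false
  ext ⟨E, U⟩
  simp only [mem_filter, mem_openMatchings]
  constructor
  · rintro ⟨⟨hE, hcard⟩, hU, hE'⟩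
    refine ⟨(IsOpenMatching.insert_iff_of_unused hm hU fun x hx ↦ hE' ?_).1 hE, hcard⟩
    exact mem_image_of_mem Prod.snd hx
  · rintro ⟨hE, hcard⟩
    have hU : m ∉ U := fun h ↦ m_notMem (hE.open_mem m h)
    exact ⟨⟨(IsOpenMatching.insert_iff_of_unused hm hU (hE.mk_notMem m_notMem)).2 hE, hcard⟩, hU,
      hE.notMem_image_snd m_notMem⟩

theorem card_filter_open_openMatchings_insert (hm : ∀ x ∈ S, x < m) :
    #{p ∈ openMatchings (insert m S) j (h + 1) | m ∈ p.2} = #(openMatchings S j h) := by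
  have m_notMem : m ∉ S := fun h ↦ (hm m h).false
  refine card_nbij' (fun p ↦ (p.1, p.2.erase m)) (fun p ↦ (p.1, insert m p.2)) ?_ ?_ ?_ ?_
  · rintro ⟨E, U⟩ hp
    simp only [coe_filter, mem_openMatchings, Set.mem_ofPred_eq, mem_coe] at hp ⊢
    obtain ⟨⟨hE, card_E, card_U⟩, hU⟩ := hp
    rw [← IsOpenMatching.insert_insert_open_iff hm (notMem_erase m U), insert_erase hU,
      card_erase_of_mem hU, card_U]
    exact ⟨hE, card_E, rfl⟩
  · rintro ⟨E, U⟩ hp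
    simp only [coe_filter, mem_openMatchings, Set.mem_ofPred_eq, mem_coe] at hp ⊢
    obtain ⟨hE, card_E, card_U⟩ := hp
    have hU : m ∉ U := fun h ↦ m_notMem (hE.open_mem m h)
    rw [IsOpenMatching.insert_insert_open_iff hm hU, card_insert_of_notMem hU, card_U]
    exact ⟨⟨hE, card_E, rfl⟩, mem_insert_self m U⟩
  · rintro ⟨E, U⟩ hp
    simp [insert_erase (mem_filter.1 hp).2]
  · rintro ⟨E, U⟩ hp
    have hE : IsOpenMatching S E U := (mem_openMatchings.1 hp).1
    simp [erase_insert fun h ↦ m_notMem (hE.open_mem m h)]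

/-- The set of edges and the set of open points left after joining the last open point to `m`;
this undoes the removal of the edge that ends at the largest point `m`. -/
def joinLast (m : α) (p : Finset (α × α) × Finset α) (hp : p.2.Nonempty) :
    Finset (α × α) × Finset α :=
  (insert (p.2.max' hp, m) p.1, p.2.erase (p.2.max' hp))

theorem joinLast_inj {p q : Finset (α × α) × Finset α} {hp : p.2.Nonempty} {hq : q.2.Nonempty}
    (hpm : ∀ x, (x, m) ∉ p.1) (hqm : ∀ x, (x, m) ∉ q.1) :
    joinLast m p hp = joinLast m q hq ↔ p = q := by
  refine ⟨fun heq ↦ ?_, by rintro rfl; rfl⟩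
  obtain ⟨edges_eq, open_eq⟩ := Prod.ext_iff.1 heq
  simp only [joinLast] at edges_eq open_eq
  have max_eq : p.2.max' hp = q.2.max' hq := by
    have mem : (p.2.max' hp, m) ∈ insert (q.2.max' hq, m) q.1 := edges_eq ▸ mem_insert_self ..
    exact congrArg Prod.fst ((mem_insert.1 mem).resolve_right (hqm _))
  ext1
  · rw [← erase_insert (hpm (p.2.max' hp)), edges_eq, max_eq, erase_insert (hqm _)]
  · rw [← insert_erase (p.2.max'_mem hp), open_eq, max_eq, insert_erase (q.2.max'_mem hq)]

theorem joinLast_mem_openMatchings (hm : ∀ x ∈ S, x < m) {p : Finset (α × α) × Finset α}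
    (hp : p ∈ openMatchings S j (h + 1)) (hne : p.2.Nonempty) :
    joinLast m p hne ∈ openMatchings (insert m S) (j + 1) h := by
  obtain ⟨hE, card_E, card_U⟩ := mem_openMatchings.1 hp
  have hpm := hE.mk_notMem fun h ↦ (hm m h).false
  have max_mem := p.2.max'_mem hne
  rw [joinLast, mem_openMatchings, IsOpenMatching.insert_insert_edge_iff hm (hpm _),
    insert_erase max_mem, card_insert_of_notMem (hpm _), card_erase_of_mem max_mem, card_E,
    card_U]
  exact ⟨⟨hE, fun u ↦ p.2.lt_max'_of_mem_erase_max' hne⟩, rfl, rfl⟩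

theorem exists_joinLast_eq (hm : ∀ x ∈ S, x < m) {q : Finset (α × α) × Finset α}
    (hq : q ∈ openMatchings (insert m S) (j + 1) h) (hqm : m ∈ q.1.image Prod.snd) :
    ∃ p ∈ openMatchings S j (h + 1), ∃ hp : p.2.Nonempty, joinLast m p hp = q := by
  obtain ⟨F, U⟩ := q
  obtain ⟨hF, card_F, card_U⟩ := mem_openMatchings.1 hq
  obtain ⟨⟨x, y⟩, hx, rfl : y = m⟩ := mem_image.1 hqm
  rw [← insert_erase hx, IsOpenMatching.insert_insert_edge_iff hm (notMem_erase _ _)] at hF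
  obtain ⟨hE, lt_x⟩ := hF
  have x_notMem : x ∉ U := fun hx ↦ (lt_x x hx).false
  have max_eq : (insert x U).max' (insert_nonempty x U) = x :=
    (max'_eq_iff ..).2 ⟨mem_insert_self .., by simpa using fun u hu ↦ (lt_x u hu).le⟩
  refine ⟨(F.erase (x, y), insert x U), mem_openMatchings.2 ⟨hE, ?_, ?_⟩,
    insert_nonempty x U, ?_⟩
  · rw [card_erase_of_mem hx, card_F, Nat.add_sub_cancel]
  · rw [card_insert_of_notMem x_notMem, card_U]
  · simp only [joinLast, max_eq, insert_erase hx, erase_insert x_notMem]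

theorem card_filter_edge_openMatchings_insert (hm : ∀ x ∈ S, x < m) :
    #{p ∈ openMatchings (insert m S) (j + 1) h | m ∈ p.1.image Prod.snd} =
      #(openMatchings S j (h + 1)) := by
  have m_notMem : m ∉ S := fun h ↦ (hm m h).false
  have edge_notMem {p} (hp : p ∈ openMatchings S j (h + 1)) : ∀ x, (x, m) ∉ p.1 :=
    (mem_openMatchings.1 hp).1.mk_notMem m_notMem
  have nonempty {p} (hp : p ∈ openMatchings S j (h + 1)) : p.2.Nonempty :=
    card_pos.1 <| (mem_openMatchings.1 hp).2.2 ▸ h.succ_pos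
  symm
  refine card_bij (fun p hp ↦ joinLast m p (nonempty hp)) (fun p hp ↦ mem_filter.2 ⟨?_, ?_⟩)
    (fun p hp q hq ↦ (joinLast_inj (edge_notMem hp) (edge_notMem hq)).1) fun q hq ↦ ?_
  · exact joinLast_mem_openMatchings hm hp _
  · exact mem_image_of_mem Prod.snd (mem_insert_self ..)
  · obtain ⟨p, hp, _, rfl⟩ := exists_joinLast_eq hm (mem_filter.1 hq).1 (mem_filter.1 hq).2
    exact ⟨p, hp, rfl⟩

theorem card_openMatchings_insert (hm : ∀ x ∈ S, x < m) :
    #(openMatchings (insert m S) j h) = #(openMatchings S j h) +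
      #{p ∈ openMatchings (insert m S) j h | m ∈ p.2} +
      #{p ∈ openMatchings (insert m S) j h | m ∈ p.1.image Prod.snd} := by
  have not_open_of_edge : ∀ p ∈ openMatchings (insert m S) j h,
      m ∈ p.1.image Prod.snd → m ∉ p.2 := by
    intro p hp hE hU
    obtain ⟨e, he, rfl⟩ := mem_image.1 hE
    have matching := (mem_openMatchings.1 hp).1
    rcases matching.uncovered e he _ hU with lt | lt
    exacts [(matching.lt e he).not_gt lt, lt.false]
  have open_or_not := card_filter_add_card_filter_not (s := openMatchings (insert m S) j h)
    (m ∈ ·.2)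
  have edge_or_not := card_filter_add_card_filter_not
    (s := {p ∈ openMatchings (insert m S) j h | m ∉ p.2}) (m ∈ ·.1.image Prod.snd)
  have edge_and_not_open : {p ∈ openMatchings (insert m S) j h | m ∉ p.2 ∧
      m ∈ p.1.image Prod.snd} =
        {p ∈ openMatchings (insert m S) j h | m ∈ p.1.image Prod.snd} :=
    filter_congr fun p hp ↦ and_iff_right_of_imp (not_open_of_edge p hp)
  rw [filter_filter, filter_filter, edge_and_not_open,
    filter_unused_openMatchings_insert hm] at edge_or_not
  omega

theorem card_openMatchings (S : Finset α) (j h : ℕ) :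
    #(openMatchings S j h) = ballot j h * (#S).choose (2 * j + h) := by
  induction S using Finset.induction_on_max generalizing j h with
  | empty =>
    have empty_mem : IsOpenMatching (∅ : Finset α) ∅ ∅ :=
      ⟨⟨by simp, by simp, by simp⟩, by simp, by simp, by simp⟩
    have no_edges (j) : (∅ : Finset (α × α)).powersetCard (j + 1) = ∅ :=
      powersetCard_eq_empty.2 j.succ_pos
    rcases j with _ | j <;> rcases h with _ | h <;>
      simp [openMatchings, filter_singleton, empty_mem, ballot, no_edges, mul_add, ← add_assoc]
  | insert m S hm ih =>
    have m_notMem : m ∉ S := fun h ↦ (hm m h).false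
    have no_open (j) : #{p ∈ openMatchings (insert m S) j 0 | m ∈ p.2} = 0 := by
      refine card_filter_eq_zero_iff.2 fun p hp ↦ ?_
      simp [card_eq_zero.1 (mem_openMatchings.1 hp).2.2]
    have no_edge (h) : #{p ∈ openMatchings (insert m S) 0 h | m ∈ p.1.image Prod.snd} = 0 := by
      refine card_filter_eq_zero_iff.2 fun p hp ↦ ?_
      simp [card_eq_zero.1 (mem_openMatchings.1 hp).2.1]
    rw [card_openMatchings_insert hm, card_insert_of_notMem m_notMem]
    rcases j with _ | j <;> rcases h with _ | h <;>
      simp only [no_open, no_edge, card_filter_open_openMatchings_insert hm,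
        card_filter_edge_openMatchings_insert hm, ih]
    · simp
    · grind [ballot, Nat.choose_succ_succ']
    · grind [ballot, Nat.choose_succ_succ']
    · grind [ballot, Nat.choose_succ_succ']

theorem card_noncrossingMatchings (S : Finset α) (j : ℕ) :
    #(noncrossingMatchings S j) = catalan j * (#S).choose (2 * j) := by
  rw [← ballot_zero_right, ← add_zero (2 * j), ← card_openMatchings]
  refine card_nbij' (fun E ↦ (E, ∅)) Prod.fst ?_ ?_ ?_ ?_
  · intro E hE
    simp only [mem_coe, mem_noncrossingMatchings, mem_openMatchings] at hE ⊢
    exact ⟨⟨hE.1, hE.2.1, by simp, by simp⟩, hE.2.2, rfl⟩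
  · intro p hp
    simp only [mem_coe, mem_noncrossingMatchings, mem_openMatchings] at hp ⊢
    exact ⟨hp.1.toIsNoncrossingMatching, hp.1.endpoints_mem, hp.2.1⟩
  · exact fun E _ ↦ rfl
  · exact fun p hp ↦ Prod.ext rfl (card_eq_zero.1 (mem_openMatchings.1 hp).2.2).symm

end Matching

section Words

open Finset

theorem card_filter_forall_eq_false_forall_eq_true {α : Type*} [Fintype α] [DecidableEq α]
    {L R : Finset α} (hLR : Disjoint L R) {i : ℕ} (hi : #L ≤ i) :
    #{c : α → Bool | #{k | c k = false} = i ∧ (∀ x ∈ L, c x = false) ∧ ∀ x ∈ R, c x = true} =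
      (Fintype.card α - (#R + #L)).choose (i - #L) := by
  have subset_compl : L ⊆ Rᶜ := subset_compl_iff_disjoint_right.2 hLR
  rw [← Nat.sub_sub, ← card_compl, ← card_filter_powersetCard_subset L Rᶜ i subset_compl hi]
  refine card_nbij' (fun c ↦ ({k | c k = false} : Finset α)) (fun W k ↦ decide (k ∉ W)) ?_ ?_ ?_ ?_
  · intro c hc
    simp only [coe_filter, Set.mem_ofPred_eq, mem_univ, true_and, mem_powersetCard] at hc ⊢
    obtain ⟨card_eq, eq_false, eq_true⟩ := hc
    refine ⟨⟨fun k hk ↦ mem_compl.2 fun hkR ↦ ?_, card_eq⟩, fun k hk ↦ ?_⟩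
    · simp [eq_true k hkR] at hk
    · simp [eq_false k hk]
  · intro W hW
    simp only [coe_filter, Set.mem_ofPred_eq, mem_univ, true_and, mem_powersetCard] at hW ⊢
    simp only [decide_eq_false_iff_not, not_not, decide_eq_true_eq, filter_mem_eq_inter, univ_inter]
    exact ⟨hW.1.2, fun k hk ↦ hW.2 hk, fun k hk hkW ↦ mem_compl.1 (hW.1.1 hkW) hk⟩
  · intro c _
    ext k
    simp
  · intro W _
    ext k
    simp

variable {α : Type*} [LinearOrder α] {E : Finset (α × α)}

namespace IsNoncrossingMatching

theorem card_image_fst (hE : IsNoncrossingMatching E) : #(E.image Prod.fst) = #E :=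
  card_image_of_injOn fun e he f hf hef ↦ by
    by_contra hne
    exact (hE.endpoints_ne e he f hf hne).1 hef

theorem card_image_snd (hE : IsNoncrossingMatching E) : #(E.image Prod.snd) = #E :=
  card_image_of_injOn fun e he f hf hef ↦ by
    by_contra hne
    exact (hE.endpoints_ne e he f hf hne).2.2.2 hef

theorem disjoint_image_fst_image_snd (hE : IsNoncrossingMatching E) :
    Disjoint (E.image Prod.fst) (E.image Prod.snd) := by
  simp only [disjoint_left, mem_image, not_exists, not_and]
  rintro _ ⟨e, he, rfl⟩ f hf hfe
  rcases eq_or_ne e f with rfl | hne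
  · exact (hE.lt e he).ne' hfe
  · exact (hE.endpoints_ne e he f hf hne).2.1 hfe.symm

theorem card_le_card_eq_false [Fintype α] (hE : IsNoncrossingMatching E) {c : α → Bool}
    (hc : ∀ e ∈ E, c e.1 = false) : #E ≤ #{k | c k = false} := by
  rw [← hE.card_image_fst]
  refine card_le_card (image_subset_iff.2 fun e he ↦ ?_)
  simpa using hc e he

theorem card_compatible_words [Fintype α] (hE : IsNoncrossingMatching E) {i : ℕ} (hi : #E ≤ i) :
    #{c : α → Bool | #{k | c k = false} = i ∧ ∀ e ∈ E, c e.1 = false ∧ c e.2 = true} =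
      (Fintype.card α - 2 * #E).choose (i - #E) := by
  have := card_filter_forall_eq_false_forall_eq_true hE.disjoint_image_fst_image_snd
    (hE.card_image_fst.trans_le hi)
  simpa only [forall_mem_image, ← forall₂_and, hE.card_image_fst, hE.card_image_snd,
    ← two_mul] using this

end IsNoncrossingMatching

theorem isContraction_and_isNoncrossing_iff {N : ℕ} {c : Fin N → Bool}
    {E : Finset (Fin N × Fin N)} :
    IsContraction c E ∧ IsNoncrossing E ↔
      IsNoncrossingMatching E ∧ ∀ e ∈ E, c e.1 = false ∧ c e.2 = true := by
  constructor
  · rintro ⟨⟨hE, endpoints_ne⟩, noncrossing⟩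
    exact ⟨⟨fun e he ↦ (hE e he).1, endpoints_ne,
      fun e he f hf hcross ↦ noncrossing e he f hf (Or.inl hcross)⟩, fun e he ↦ (hE e he).2⟩
  · rintro ⟨hE, hc⟩
    exact ⟨⟨fun e he ↦ ⟨hE.lt e he, hc e he⟩, hE.endpoints_ne⟩, fun e he f hf hcross ↦
      hcross.elim (hE.noncrossing e he f hf) (hE.noncrossing f hf e he)⟩

open Classical in
theorem card_filter_words_matchings [Fintype α] {i j : ℕ} (hji : j ≤ i) :
    #{p : (α → Bool) × Finset (α × α) | #{k | p.1 k = false} = i ∧ IsNoncrossingMatching p.2 ∧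
      (∀ e ∈ p.2, p.1 e.1 = false ∧ p.1 e.2 = true) ∧ #p.2 = j} =
      #(noncrossingMatchings (univ : Finset α) j) *
        (Fintype.card α - 2 * j).choose (i - j) := by
  rw [← smul_eq_mul, ← sum_const]
  calc
    _ = #((noncrossingMatchings (univ : Finset α) j).sigma fun E ↦
        ({c | #{k | c k = false} = i ∧ ∀ e ∈ E, c e.1 = false ∧ c e.2 = true} :
          Finset (α → Bool))) := by
      refine card_nbij' (fun p ↦ ⟨p.2, p.1⟩) (fun p ↦ (p.2, p.1)) ?_ ?_
        (fun _ _ ↦ rfl) (fun _ _ ↦ rfl) <;>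
      · rintro ⟨_, _⟩ hp
        simp only [coe_filter, coe_sigma, Set.mem_ofPred_eq, Set.mem_sigma_iff, mem_univ,
          true_and, mem_coe, mem_noncrossingMatchings] at hp ⊢
        tauto
    _ = ∑ _E ∈ noncrossingMatchings (univ : Finset α) j,
        (Fintype.card α - 2 * j).choose (i - j) := by
      rw [card_sigma]
      refine sum_congr rfl fun E E_mem ↦ ?_
      obtain ⟨hE, -, rfl⟩ := mem_noncrossingMatchings.1 E_mem
      exact hE.card_compatible_words hji

end Words

theorem stmt8_general {α : Type*} [Fintype α] [LinearOrder α] (i j : ℕ) :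
    Nat.card {p : (α → Bool) × Finset (α × α) //
      (Finset.univ.filter fun k ↦ p.1 k = false).card = i ∧ IsNoncrossingMatching p.2 ∧
        (∀ e ∈ p.2, p.1 e.1 = false ∧ p.1 e.2 = true) ∧ p.2.card = j} =
      catalan j * (Fintype.card α).choose (i + j) * (i + j).choose (2 * j) := by
  classical
  rcases lt_or_ge i j with hij | hji
  · rw [Nat.choose_eq_zero_of_lt (by omega : i + j < 2 * j), mul_zero, Nat.card_eq_zero]
    refine Or.inl ⟨?_⟩
    rintro ⟨p, rfl, hE, hc, rfl⟩
    exact hij.not_ge (hE.card_le_card_eq_false fun e he ↦ (hc e he).1)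
  · rw [Nat.card_eq_fintype_card, Fintype.card_subtype, card_filter_words_matchings hji,
      card_noncrossingMatchings, mul_assoc, mul_assoc, Nat.choose_mul (by omega : 2 * j ≤ i + j),
      Finset.card_univ, show i + j - 2 * j = i - j by omega]

theorem stmt8 (n i j : ℕ) (hji : j ≤ i) (hin : i ≤ n - j) :
    pairCountAA n j i = catalan j * Nat.choose n (i + j) * Nat.choose (i + j) (2 * j) := by
  simpa only [pairCountAA, ← and_assoc (c := _ = j), isContraction_and_isNoncrossing_iff,
    Fintype.card_fin] using stmt8_general (α := Fin n) i j
end
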